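/- Let G be a cubic graph on at least seven vertices. Then G contains two vertex-disjoint cycles. -/

import Mathlib

/-! Let `S` be a smallest nonempty vertex set spanning at least `#S` edges; it is the vertex set of
a shortest cycle. Every smaller nonempty set spans fewer edges than it has vertices. Deleting single
vertices from `S` and averaging, one finds that `S` spans exactly `#S` edges and is `2`-regular.
If `#S ≥ 5`, a vertex outside `S` has at most one neighbor in `S`, since otherwise exchanging two
adjacent vertices of `S` for it would give a smaller set spanning too many edges.

In a cubic graph exactly `#S` edges leave `S`. If the complement `T` spans `e(T) < #T` edges, then
`3 * #T = #S + 2 * e(T)` gives `#T + 2 ≤ #S`. With at least seven vertices this forces `5 ≤ #S`, so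
each vertex of `T` receives at most one of the `#S` edges and `#S ≤ #T`, which is absurd. Hence `S`
and `T` both span too many edges to be forests. -/

open Finset

section EdgeCounting

variable {V : Type*} (G : SimpleGraph V) [DecidableRel G.Adj]
  {S : Finset V} {v : V}

/-- The number of neighbors of `v` in the vertex set `S`; the vertex `v` need not lie in `S`. -/
def degreeIn (S : Finset V) (v : V) : ℕ := #{w ∈ S | G.Adj v w}

/-- The number of edges of `G` with both ends in `S`. -/
def edgesIn (S : Finset V) : ℕ := #(G.induce (S : Set V)).edgeFinset

theorem sum_degreeIn_eq_two_mul_edgesIn (S : Finset V) :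
    ∑ v ∈ S, degreeIn G S v = 2 * edgesIn G S := by
  have degree_induce (v : (S : Set V)) :
      (G.induce (S : Set V)).degree v = degreeIn G S v := by
    rw [degreeIn, ← SimpleGraph.card_neighborFinset_eq_degree,
      ← card_map (Function.Embedding.subtype (· ∈ (S : Set V)))]
    congr 1
    ext w
    simp [and_comm]
  rw [edgesIn, ← SimpleGraph.sum_degrees_eq_twice_card_edges, ← sum_coe_sort]
  exact sum_congr rfl fun v _ ↦ (degree_induce v).symm

theorem sum_degreeIn_comm (S T : Finset V) :
    ∑ v ∈ S, degreeIn G T v = ∑ v ∈ T, degreeIn G S v := by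
  simpa only [degreeIn, bipartiteAbove, bipartiteBelow, G.adj_comm] using
    sum_card_bipartiteAbove_eq_sum_card_bipartiteBelow G.Adj (s := S) (t := T)

variable [DecidableEq V]

theorem degreeIn_insert (hv : v ∉ S) (u : V) :
    degreeIn G (insert v S) u = degreeIn G S u + if G.Adj u v then 1 else 0 := by
  simp only [degreeIn, card_filter, sum_insert hv, add_comm]

theorem degreeIn_erase (hv : v ∈ S) (u : V) :
    degreeIn G S u = degreeIn G (S.erase v) u + if G.Adj u v then 1 else 0 := by
  rw [← degreeIn_insert G (notMem_erase v S), insert_erase hv]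

theorem edgesIn_insert (hv : v ∉ S) :
    edgesIn G (insert v S) = edgesIn G S + degreeIn G S v := by
  have degree_self : degreeIn G (insert v S) v = degreeIn G S v := by simp [degreeIn_insert G hv]
  have degree_swap : ∑ u ∈ S, (if G.Adj u v then 1 else 0) = degreeIn G S v := by
    simp only [degreeIn, card_filter, G.adj_comm]
  have handshake := sum_degreeIn_eq_two_mul_edgesIn G (insert v S)
  rw [sum_insert hv, degree_self, sum_congr rfl fun u _ ↦ degreeIn_insert G hv u,
    sum_add_distrib, degree_swap, sum_degreeIn_eq_two_mul_edgesIn] at handshake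
  lia

theorem edgesIn_erase (hv : v ∈ S) :
    edgesIn G S = edgesIn G (S.erase v) + degreeIn G S v := by
  have h := edgesIn_insert G (notMem_erase v S)
  rw [insert_erase hv] at h
  simpa [degreeIn_erase G hv v] using h

theorem degreeIn_add_degreeIn_compl [Fintype V] (S : Finset V) (v : V) :
    degreeIn G S v + degreeIn G Sᶜ v = G.degree v := by
  simp only [degreeIn, card_filter, sum_add_sum_compl]
  rw [← card_filter, ← SimpleGraph.card_neighborFinset_eq_degree,
    SimpleGraph.neighborFinset_eq_filter]

theorem sum_degree_eq_two_mul_edgesIn_add [Fintype V] (S : Finset V) :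
    ∑ v ∈ S, G.degree v = 2 * edgesIn G S + ∑ v ∈ S, degreeIn G Sᶜ v := by
  simp only [← degreeIn_add_degreeIn_compl G S, sum_add_distrib,
    sum_degreeIn_eq_two_mul_edgesIn]

end EdgeCounting

theorem card_edgeFinset_lt_card_of_isAcyclic {V : Type*} [Fintype V] [Nonempty V]
    {G : SimpleGraph V} [Fintype G.edgeSet] (hG : G.IsAcyclic) :
    #G.edgeFinset < Fintype.card V := by
  classical
  obtain ⟨F, hGF, -, hF⟩ :=
    SimpleGraph.connected_top.exists_isTree_le_of_le_of_isAcyclic le_top hG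
  calc #G.edgeFinset
    _ ≤ #F.edgeFinset := card_le_card (SimpleGraph.edgeFinset_mono hGF)
    _ < #F.edgeFinset + 1 := Nat.lt_succ_self _
    _ = Fintype.card V := hF.card_edgeFinset

theorem exists_isCycle_of_not_isAcyclic_induce {V : Type*} {G : SimpleGraph V} {s : Set V}
    (h : ¬ (G.induce s).IsAcyclic) :
    ∃ (a : V) (c : G.Walk a a), c.IsCycle ∧ ∀ v ∈ c.support, v ∈ s := by
  simp only [SimpleGraph.IsAcyclic, not_forall, not_not] at h
  obtain ⟨a, c, hc⟩ := h
  let f := SimpleGraph.Embedding.induce (G := G) s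
  refine ⟨a, c.map f.toHom, hc.map f.injective, fun v hv ↦ ?_⟩
  obtain ⟨w, -, rfl⟩ := List.mem_map.mp (SimpleGraph.Walk.support_map f.toHom c ▸ hv)
  exact w.2

section EdgeRich

variable {V : Type*} {G : SimpleGraph V} [DecidableRel G.Adj] {S : Finset V}

variable (G) in
/-- A nonempty vertex set that spans at least as many edges as it has vertices, and therefore
contains a cycle of `G`. -/
def EdgeRich (S : Finset V) : Prop := S.Nonempty ∧ #S ≤ edgesIn G S

variable (G) in
/-- An edge-rich set of least cardinality. These are the vertex sets of the shortest cycles of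
`G`; phrasing minimality through edge counts replaces surgery on cycles by counting. -/
def SmallestEdgeRich (S : Finset V) : Prop := MinimalFor (EdgeRich G) Finset.card S

theorem EdgeRich.exists_isCycle (hS : EdgeRich G S) :
    ∃ (a : V) (c : G.Walk a a), c.IsCycle ∧ ∀ v ∈ c.support, v ∈ S := by
  have : Nonempty (S : Set V) := hS.1.to_subtype
  refine exists_isCycle_of_not_isAcyclic_induce (s := (S : Set V)) fun hacyclic ↦ ?_
  have edges_lt : edgesIn G S < #S := by
    simpa [edgesIn] using card_edgeFinset_lt_card_of_isAcyclic hacyclic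
  exact hS.2.not_gt edges_lt

theorem EdgeRich.three_le_card (hS : EdgeRich G S) : 3 ≤ #S := by
  have edges_le : edgesIn G S ≤ (#S).choose 2 := by
    simpa [edgesIn] using (G.induce (S : Set V)).card_edgeFinset_le_card_choose_two
  have card_le := hS.2.trans edges_le
  have card_pos := hS.1.card_pos
  by_contra! card_lt
  interval_cases #S <;> simp at card_le

theorem EdgeRich.exists_smallestEdgeRich (hS : EdgeRich G S) : ∃ T, SmallestEdgeRich G T :=
  exists_minimalFor_of_wellFoundedLT _ _ ⟨S, hS⟩

namespace SmallestEdgeRich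

theorem edgesIn_lt_card (hS : SmallestEdgeRich G S) {A : Finset V} (hA : A.Nonempty)
    (hlt : #A < #S) : edgesIn G A < #A := by
  by_contra! hle
  exact hlt.not_ge (hS.2 ⟨hA, hle⟩ hlt.le)

theorem edgesIn_add_two_le (hS : SmallestEdgeRich G S) {v : V} (hv : v ∈ S) :
    edgesIn G S + 2 ≤ #S + degreeIn G S v := by
  classical
  have three_le := hS.1.three_le_card
  have card_erase := card_erase_add_one hv
  have sparse := hS.edgesIn_lt_card (A := S.erase v) (card_pos.mp (by lia)) (by lia)
  have edges_erase := edgesIn_erase G hv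
  lia

theorem edgesIn_eq_card (hS : SmallestEdgeRich G S) : edgesIn G S = #S := by
  refine le_antisymm ?_ hS.1.2
  have three_le := hS.1.three_le_card
  have averaged : #S * (edgesIn G S + 2) ≤ #S * #S + 2 * edgesIn G S := by
    simpa [sum_add_distrib, sum_degreeIn_eq_two_mul_edgesIn] using
      sum_le_sum fun v hv ↦ hS.edgesIn_add_two_le hv
  -- `averaged` rearranges to `(#S - 2) * (edgesIn G S - #S) ≤ 0`.
  nlinarith

theorem degreeIn_eq_two (hS : SmallestEdgeRich G S) {v : V} (hv : v ∈ S) :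
    degreeIn G S v = 2 := by
  have two_le (u) (hu : u ∈ S) : 2 ≤ degreeIn G S u := by
    have edges_le := hS.edgesIn_add_two_le hu
    rw [hS.edgesIn_eq_card] at edges_le
    lia
  have sum_eq : ∑ _u ∈ S, 2 = ∑ u ∈ S, degreeIn G S u := by
    rw [sum_degreeIn_eq_two_mul_edgesIn, hS.edgesIn_eq_card, sum_const, smul_eq_mul, mul_comm]
  exact ((sum_eq_sum_iff_of_le two_le).mp sum_eq v hv).symm

theorem degreeIn_erase_erase_le_one [DecidableEq V] (hS : SmallestEdgeRich G S) {p q x : V}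
    (hp : p ∈ S) (hq : q ∈ S) (hpq : G.Adj p q) (hx : x ∉ S) :
    degreeIn G ((S.erase p).erase q) x ≤ 1 := by
  have hq' : q ∈ S.erase p := mem_erase.mpr ⟨hpq.ne', hq⟩
  have hx' : x ∉ (S.erase p).erase q := fun h ↦ hx (mem_of_mem_erase (mem_of_mem_erase h))
  have card_exchange : #(insert x ((S.erase p).erase q)) + 1 = #S := by
    rw [card_insert_of_notMem hx', card_erase_add_one hq', card_erase_add_one hp]
  have sparse := hS.edgesIn_lt_card (insert_nonempty x ((S.erase p).erase q)) (by lia)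
  have degree_q : degreeIn G (S.erase p) q = 1 := by
    have degree_erase := degreeIn_erase G hp q
    rw [if_pos hpq.symm, hS.degreeIn_eq_two hq] at degree_erase
    lia
  have edges_exchange : edgesIn G (insert x ((S.erase p).erase q)) + 3
      = #S + degreeIn G ((S.erase p).erase q) x := by
    rw [edgesIn_insert G hx', ← hS.edgesIn_eq_card, edgesIn_erase G hp, edgesIn_erase G hq',
      degree_q, hS.degreeIn_eq_two hp]
    lia
  lia

theorem exists_adj_erase_erase [DecidableEq V] (hS : SmallestEdgeRich G S)
    (hcard : 5 ≤ #S) {u w : V} (hu : u ∈ S) (hw : w ∈ S) (huw : u ≠ w) :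
    ∃ p ∈ (S.erase u).erase w, ∃ q ∈ (S.erase u).erase w, G.Adj p q := by
  have hw' : w ∈ S.erase u := mem_erase.mpr ⟨huw.symm, hw⟩
  have degree_w_le : degreeIn G (S.erase u) w ≤ 2 := by
    rw [← hS.degreeIn_eq_two hw, degreeIn_erase G hu w]
    exact Nat.le_add_right _ _
  have edges_pos : 0 < 2 * edgesIn G ((S.erase u).erase w) := by
    have edges_eq := hS.edgesIn_eq_card
    rw [edgesIn_erase G hu, edgesIn_erase G hw', hS.degreeIn_eq_two hu] at edges_eq
    lia
  rw [← sum_degreeIn_eq_two_mul_edgesIn, sum_pos_iff] at edges_pos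
  obtain ⟨p, hp, degree_pos⟩ := edges_pos
  obtain ⟨q, hq⟩ := card_pos.mp degree_pos
  exact ⟨p, hp, q, mem_filter.mp hq⟩

theorem degreeIn_le_one (hS : SmallestEdgeRich G S) (hcard : 5 ≤ #S) {x : V} (hx : x ∉ S) :
    degreeIn G S x ≤ 1 := by
  classical
  by_contra! two_le
  obtain ⟨u, hu, w, hw, huw⟩ := one_lt_card.mp two_le
  obtain ⟨huS, hxu⟩ := mem_filter.mp hu
  obtain ⟨hwS, hxw⟩ := mem_filter.mp hw
  obtain ⟨p, hp, q, hq, hpq⟩ := hS.exists_adj_erase_erase hcard huS hwS huw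
  simp only [mem_erase] at hp hq
  refine (hS.degreeIn_erase_erase_le_one hp.2.2 hq.2.2 hpq hx).not_gt
    (one_lt_card.mpr ⟨u, ?_, w, ?_, huw⟩)
  · simp [huS, hxu, hp.2.1.symm, hq.2.1.symm]
  · simp [hwS, hxw, hp.1.symm, hq.1.symm]

theorem edgeRich_compl [Fintype V] [DecidableEq V] (hS : SmallestEdgeRich G S)
    (hcubic : G.IsRegularOfDegree 3) (hcard : 7 ≤ Fintype.card V) : EdgeRich G Sᶜ := by
  have degree_sum (T : Finset V) : 3 * #T = 2 * edgesIn G T + ∑ v ∈ T, degreeIn G Tᶜ v := by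
    rw [← sum_degree_eq_two_mul_edgesIn_add, sum_congr rfl fun v _ ↦ hcubic.degree_eq v,
      sum_const, smul_eq_mul, mul_comm]
  have crossing : ∑ v ∈ Sᶜ, degreeIn G S v = #S := by
    have degree_sum_S := degree_sum S
    rw [hS.edgesIn_eq_card, sum_degreeIn_comm] at degree_sum_S
    lia
  have card_pos := hS.1.1.card_pos
  have card_add := card_add_card_compl S
  have nonempty : Sᶜ.Nonempty :=
    nonempty_of_sum_ne_zero (f := degreeIn G S) (by lia)
  refine ⟨nonempty, ?_⟩
  by_contra! sparse
  have compl_degree_sum := degree_sum Sᶜ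
  rw [compl_compl, crossing] at compl_degree_sum
  have card_compl_lt : #Sᶜ < #S := by lia
  have five_le : 5 ≤ #S := by lia
  have card_le : #S ≤ #Sᶜ := by
    rw [← crossing]
    simpa using sum_le_card_nsmul Sᶜ (degreeIn G S) 1 fun v hv ↦
      hS.degreeIn_le_one five_le (mem_compl.mp hv)
  exact card_compl_lt.not_ge card_le

end SmallestEdgeRich

theorem edgeRich_univ_of_two_le_degree [Fintype V] [Nonempty V] (h : ∀ v, 2 ≤ G.degree v) :
    EdgeRich G univ := by
  classical
  refine ⟨univ_nonempty, ?_⟩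
  have degree_sum := sum_degree_eq_two_mul_edgesIn_add G univ
  have two_mul_card_le := card_nsmul_le_sum univ (G.degree ·) 2 fun v _ ↦ h v
  simp only [compl_univ, degreeIn, filter_empty, card_empty, sum_const_zero] at degree_sum
  rw [smul_eq_mul] at two_mul_card_le
  lia

theorem exists_disjoint_isCycle_of_edgeRich {T : Finset V} (hS : EdgeRich G S)
    (hT : EdgeRich G T) (hST : Disjoint S T) :
    ∃ (a b : V) (c₁ : G.Walk a a) (c₂ : G.Walk b b),
      c₁.IsCycle ∧ c₂.IsCycle ∧ ∀ v ∈ c₁.support, v ∉ c₂.support := by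
  obtain ⟨a, c₁, hc₁, support₁⟩ := hS.exists_isCycle
  obtain ⟨b, c₂, hc₂, support₂⟩ := hT.exists_isCycle
  exact ⟨a, b, c₁, c₂, hc₁, hc₂, fun v hv₁ hv₂ ↦
    disjoint_left.mp hST (support₁ v hv₁) (support₂ v hv₂)⟩

end EdgeRich

/-- Every cubic graph on at least seven vertices contains two vertex-disjoint cycles. -/
theorem stmt_1 {V : Type} [Fintype V] [DecidableEq V] (G : SimpleGraph V)
    [DecidableRel G.Adj]
    (hcubic : ∀ v : V, G.degree v = 3)
    (hcard : 7 ≤ Fintype.card V) :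
    ∃ (a b : V) (c₁ : G.Walk a a) (c₂ : G.Walk b b),
      c₁.IsCycle ∧ c₂.IsCycle ∧ ∀ v ∈ c₁.support, v ∉ c₂.support := by
  have : Nonempty V := Fintype.card_pos_iff.mp (by lia)
  have rich_univ : EdgeRich G univ :=
    edgeRich_univ_of_two_le_degree fun v ↦ by rw [hcubic v]; lia
  obtain ⟨S, hS⟩ := rich_univ.exists_smallestEdgeRich
  exact exists_disjoint_isCycle_of_edgeRich hS.1 (hS.edgeRich_compl hcubic hcard)
    disjoint_compl_right
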